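/- arXiv:math/0112091 — 7 statements merged into one kernel-verified Lean document; each statement's English description precedes it below -/
import Mathlib

section
/- Let B be a complex Banach algebra with unit e, let A be a complex unital algebra, and let φ : A → B be an injective unital algebra homomorphism whose range φ(A) is dense in B. Then A has property (P_A) with respect to φ if and only if A has property (~P_A) with respect to φ. -/
/-!
Give `A` the topology induced by `φ`. As `φ` is injective, `a` is a unit of `A` exactly when `φ a`
is a unit of `B` whose inverse lies in `φ(A)`, so `(P_A)` says that the units of `A` form a
neighbourhood of `1`. If `φ` is local, these units are the preimage of the units of `B`, which form
a neighbourhood of `1`. Conversely, if `φ a` is a unit, choose by density some `b` with `φ b` so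
close to `(φ a)⁻¹` that both `a * b` and `b * a` are near `1`, hence units; then `a` is a unit.
-/

open Filter Topology

section Monoid

variable {M N F : Type*} [Monoid M] [Monoid N] [FunLike F M N] [MonoidHomClass F M N]

theorem isUnit_of_isUnit_mul_of_isUnit_mul {a b c : M} (hab : IsUnit (a * b))
    (hca : IsUnit (c * a)) : IsUnit a := by
  obtain ⟨r, hr⟩ := hab.exists_right_inv
  obtain ⟨l, hl⟩ := hca.exists_left_inv
  exact isUnit_iff_exists_and_exists.2
    ⟨⟨b * r, by rw [← mul_assoc, hr]⟩, ⟨l * c, by rw [mul_assoc, hl]⟩⟩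

theorem exists_units_eq_map_and_inv_mem_range_iff {f : F} (hf : Function.Injective f) {a : M} :
    (∃ u : Nˣ, (u : N) = f a ∧ ((u⁻¹ : Nˣ) : N) ∈ Set.range f) ↔ IsUnit a := by
  constructor
  · rintro ⟨u, hu, b, hb⟩
    have hab : a * b = 1 := hf (by rw [map_mul, ← hu, hb, u.mul_inv, map_one])
    have hba : b * a = 1 := hf (by rw [map_mul, ← hu, hb, u.inv_mul, map_one])
    exact ⟨⟨a, b, hab, hba⟩, rfl⟩
  · rintro ⟨v, rfl⟩
    exact ⟨Units.map (f : M →* N) v, rfl, ((v⁻¹ : Mˣ) : M), rfl⟩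

theorem isUnit_of_isUnit_map_of_eventually_comap_isUnit [TopologicalSpace N]
    [SeparatelyContinuousMul N] {f : F} (hf : DenseRange f)
    (h : ∀ᶠ a in comap f (𝓝 1), IsUnit a) {a : M} (ha : IsUnit (f a)) : IsUnit a := by
  obtain ⟨v, hv⟩ := ha
  obtain ⟨U, hU, hUnit⟩ := mem_comap.1 h
  have hright : ∀ᶠ n in 𝓝 ((v⁻¹ : Nˣ) : N), f a * n ∈ U :=
    (continuous_const_mul (f a)).tendsto' _ 1 (by rw [← hv, v.mul_inv]) hU
  have hleft : ∀ᶠ n in 𝓝 ((v⁻¹ : Nˣ) : N), n * f a ∈ U :=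
    (continuous_mul_const (f a)).tendsto' _ 1 (by rw [← hv, v.inv_mul]) hU
  obtain ⟨b, hab, hba⟩ := hf.mem_nhds (hright.and hleft)
  rw [← map_mul] at hab hba
  exact isUnit_of_isUnit_mul_of_isUnit_mul (hUnit hab) (hUnit hba)

theorem eventually_comap_isUnit_iff [TopologicalSpace N] [SeparatelyContinuousMul N]
    (hN : ∀ᶠ n in 𝓝 (1 : N), IsUnit n) {f : F} (hf : DenseRange f) :
    (∀ᶠ a in comap f (𝓝 1), IsUnit a) ↔ ∀ a, IsUnit (f a) ↔ IsUnit a :=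
  ⟨fun h _ => ⟨isUnit_of_isUnit_map_of_eventually_comap_isUnit hf h, fun ha => ha.map f⟩,
    fun h => (hN.comap f).mono fun a => (h a).1⟩

end Monoid

theorem map_add_left_comap_nhds_zero {G H F : Type*} [AddGroup G] [AddGroup H]
    [TopologicalSpace H] [SeparatelyContinuousAdd H] [FunLike F G H] [AddMonoidHomClass F G H]
    (f : F) (a : G) : map (a + ·) (comap f (𝓝 0)) = comap f (𝓝 (f a)) := by
  have hcomm : (-f a + ·) ∘ f = f ∘ (-a + ·) := by
    ext x
    simp only [Function.comp_apply, map_add, map_neg]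
  calc map (a + ·) (comap f (𝓝 0))
      = comap (-a + ·) (comap f (𝓝 0)) := (comap_equiv_symm (Equiv.addLeft a) _).symm
    _ = comap f (comap (-f a + ·) (𝓝 0)) := by rw [comap_comap, comap_comap, hcomm]
    _ = comap f (𝓝 (f a)) := by
      congr 1
      simpa [Homeomorph.addLeft_symm] using (Homeomorph.addLeft (-f a)).comap_nhds_eq 0

section AlgHom

variable {R A B : Type*} [CommSemiring R]

theorem exists_eq_smul_one_add_map_iff_mem_range [Semiring A] [Semiring B] [Algebra R A]
    [Algebra R B] (φ : A →ₐ[R] B) {b : B} :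
    (∃ (c : R) (y : A), b = c • (1 : B) + φ y) ↔ b ∈ Set.range φ := by
  constructor
  · rintro ⟨c, y, rfl⟩
    exact ⟨c • 1 + y, by rw [map_add, map_smul, map_one]⟩
  · rintro ⟨y, rfl⟩
    exact ⟨0, y, by rw [zero_smul, zero_add]⟩

theorem stmt_0_general [Ring A] [Ring B] [Algebra R A] [Algebra R B] [TopologicalSpace B]
    [IsTopologicalRing B] (hB : ∀ᶠ b in 𝓝 (1 : B), IsUnit b) (φ : A →ₐ[R] B)
    (hinj : Function.Injective φ) (hdense : DenseRange φ) :
    (∀ᶠ x in comap φ (𝓝 0), ∃ u : Bˣ, (u : B) = 1 + φ x ∧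
        ∃ (c : R) (y : A), ((u⁻¹ : Bˣ) : B) = c • (1 : B) + φ y)
      ↔ (∀ a : A, IsUnit (φ a) ↔ IsUnit a) := by
  have hlocal (x : A) : (∃ u : Bˣ, (u : B) = 1 + φ x ∧
      ∃ (c : R) (y : A), ((u⁻¹ : Bˣ) : B) = c • (1 : B) + φ y) ↔ IsUnit (1 + x) := by
    simp only [exists_eq_smul_one_add_map_iff_mem_range,
      ← exists_units_eq_map_and_inv_mem_range_iff hinj, map_add, map_one]
  have htranslate := map_add_left_comap_nhds_zero φ 1
  rw [map_one] at htranslate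
  rw [← eventually_comap_isUnit_iff hB hdense, ← htranslate, eventually_map]
  exact eventually_congr (Eventually.of_forall hlocal)

end AlgHom

/-- Lemma `lemlocglob` (a): for an injective unital algebra morphism `φ : A → B` into a
unital complex Banach algebra `B` with dense range, the local spectral invariance property
`(P_A)` holds if and only if the global property `(~P_A)` (`φ⁻¹(B⁻¹) = A⁻¹`) holds. -/
theorem stmt_0
    (B : Type*) [NormedRing B] [NormedAlgebra ℂ B] [CompleteSpace B]
    (A : Type*) [Ring A] [Algebra ℂ A]
    (φ : A →ₐ[ℂ] B)
    (hinj : Function.Injective φ)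
    (hdense : DenseRange φ) :
    (∃ ε > (0 : ℝ), ∀ x : A, ‖φ x‖ < ε →
        ∃ u : Bˣ, (u : B) = 1 + φ x ∧
          ∃ (c : ℂ) (y : A), ((u⁻¹ : Bˣ) : B) = c • (1 : B) + φ y)
      ↔ (∀ a : A, IsUnit (φ a) ↔ IsUnit a) := by
  rw [← stmt_0_general (Units.isOpen.mem_nhds isUnit_one) φ hinj hdense]
  simp only [(Metric.nhds_basis_ball.comap φ).eventually_iff, Set.mem_preimage, mem_ball_zero_iff]
end

section
/- In the ideal–quotient setting, assume that I is dense in J with respect to the norm of B. If property (P_I) and property (~P) both hold, then property (P_A) holds: there exists δ > 0 such that every a ∈ A with ‖a − e‖_B < δ is invertible in B with inverse belonging to A. -/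
/-!
Let `u ∈ A` be a unit of `B`, and let `b ∈ A` be a right inverse of `u` modulo `I`, so that
`u * b = 1 + j` with `j ∈ I`. For `x ∈ I` we have `u * (b - x) = 1 + (j - u * x)`, and the error
`j - u * x ∈ I` is as small as we like once `x` is close to `u⁻¹ * j`; such `x` exist because
`u⁻¹ * j ∈ J ⊆ closure I`. Then `1 + (j - u * x)` has its inverse in `A`, and
`u⁻¹ = (b - x) * (1 + (j - u * x))⁻¹`. Hence `A` is inverse closed in `B`,
and the units of `B` contain the open unit ball around `1`.
-/

open scoped Topology

section TopologicalRing

variable {B : Type*} [Ring B] [TopologicalSpace B] [IsTopologicalRing B]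

theorem exists_sub_units_mul_mem_of_inv_mul_mem_closure {s V : Set B} {u : Bˣ} {y : B}
    (hy : ↑u⁻¹ * y ∈ closure s) (hV : V ∈ 𝓝 0) : ∃ x ∈ s, y - u * x ∈ V := by
  have h_tendsto : Filter.Tendsto (fun x ↦ y - u * x) (𝓝 (↑u⁻¹ * y)) (𝓝 0) :=
    Continuous.tendsto' (by fun_prop) _ _ (by simp)
  obtain ⟨x, hxV, hxs⟩ := mem_closure_iff_nhds.1 hy _ (h_tendsto hV)
  exact ⟨x, hxs, hxV⟩

theorem stmt_3_general (A : Subring B) (J : Ideal B) (I : Submodule A B)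
    (hIA : (I : Set B) ⊆ A) (hIJ : (I : Set B) ⊆ J) (hJI : (J : Set B) ⊆ closure I)
    (h_small : ∀ᶠ x in 𝓝 (0 : B), x ∈ I → ∃ v : Bˣ, (v : B) = 1 + x ∧ (↑v⁻¹ : B) ∈ A)
    (h_quot : ∀ u : Bˣ, (u : B) ∈ A → ∃ b ∈ A, u * b - 1 ∈ I)
    (u : Bˣ) (hu : (u : B) ∈ A) : (↑u⁻¹ : B) ∈ A := by
  obtain ⟨b, hbA, hbI⟩ := h_quot u hu
  have h_closure : ↑u⁻¹ * (u * b - 1) ∈ closure (I : Set B) :=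
    hJI (J.mul_mem_left _ (hIJ hbI))
  obtain ⟨x, hxI, hx⟩ := exists_sub_units_mul_mem_of_inv_mul_mem_closure h_closure h_small
  have h_error : u * b - 1 - u * x ∈ I := I.sub_mem hbI (I.smul_mem ⟨u, hu⟩ hxI)
  obtain ⟨v, hv, hvA⟩ := hx h_error
  have h_mul : (v : B) = u * (b - x) := by rw [hv, mul_sub]; abel
  have h_inv : (↑u⁻¹ : B) = (b - x) * ↑v⁻¹ :=
    v.eq_mul_inv_iff_mul_eq.2 (u.inv_mul_eq_iff_eq_mul.2 h_mul)
  rw [h_inv]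
  exact A.mul_mem (A.sub_mem hbA (hIA hxI)) hvA

end TopologicalRing

/-- Theorem `thm4.02` (a), ideal–quotient setting: `B` a unital complex Banach algebra,
`J ⊊ B` a proper closed two-sided ideal, `A ⊆ B` a unital subalgebra, `I ⊆ A ∩ J` a
two-sided ring ideal of `A` which is dense in `J`.  If property `(P_I)` and property `(~P)`
hold, then property `(P_A)` holds: there is `δ > 0` such that every `a ∈ A` with
`‖a - e‖ < δ` is invertible in `B` with inverse in `A`. -/
theorem stmt_3
    (B : Type*) [NormedRing B] [NormedAlgebra ℂ B] [CompleteSpace B]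
    (A : Subalgebra ℂ B)
    (J : TwoSidedIdeal B) (hJclosed : IsClosed (J : Set B))
    (hJproper : (J : Set B) ≠ Set.univ)
    (I : Set B) (hIA : I ⊆ (A : Set B)) (hIJ : ∀ x ∈ I, x ∈ J)
    (hI0 : (0 : B) ∈ I) (hIadd : ∀ x ∈ I, ∀ y ∈ I, x + y ∈ I)
    (hIneg : ∀ x ∈ I, -x ∈ I)
    (hIl : ∀ a ∈ A, ∀ x ∈ I, a * x ∈ I) (hIr : ∀ a ∈ A, ∀ x ∈ I, x * a ∈ I)
    (hIdense : (J : Set B) ⊆ closure I)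
    -- property (P_I)
    (hPI : ∃ ε > (0 : ℝ), ∀ x ∈ I, ‖x‖ < ε →
        ∃ u : Bˣ, (u : B) = 1 + x ∧
          ∃ (c : ℂ), ∃ y ∈ I, ((u⁻¹ : Bˣ) : B) = c • (1 : B) + y)
    -- property (~P)
    (hPt : ∀ a ∈ A, (∃ b : B, a * b - 1 ∈ J ∧ b * a - 1 ∈ J) →
        ∃ a₁ ∈ A, a * a₁ - 1 ∈ I ∧ a₁ * a - 1 ∈ I) :
    -- property (P_A)
    ∃ δ > (0 : ℝ), ∀ a ∈ A, ‖a - 1‖ < δ →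
        ∃ u : Bˣ, (u : B) = a ∧ ((u⁻¹ : Bˣ) : B) ∈ A := by
  obtain ⟨ε, hε, hP⟩ := hPI
  let L : Submodule A.toSubring B :=
    { carrier := I
      add_mem' := fun hx hy ↦ hIadd _ hx _ hy
      zero_mem' := hI0
      smul_mem' := fun a x hx ↦ hIl a a.2 x hx }
  have h_small : ∀ᶠ x in 𝓝 (0 : B), x ∈ L → ∃ v : Bˣ, (v : B) = 1 + x ∧ (↑v⁻¹ : B) ∈ A := by
    refine Metric.eventually_nhds_iff_ball.2 ⟨ε, hε, fun x hxε hxI ↦ ?_⟩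
    obtain ⟨v, hv, c, y, hy, hv_inv⟩ := hP x hxI (mem_ball_zero_iff.1 hxε)
    exact ⟨v, hv, hv_inv ▸ A.add_mem (A.smul_mem A.one_mem c) (hIA hy)⟩
  have h_quot : ∀ u : Bˣ, (u : B) ∈ A → ∃ b ∈ A, u * b - 1 ∈ L := fun u hu ↦
    have ⟨b, hbA, hbI, _⟩ := hPt u hu ⟨↑u⁻¹, by simp, by simp⟩
    ⟨b, hbA, hbI⟩
  refine ⟨1, one_pos, fun a ha h_norm ↦ ?_⟩
  obtain ⟨u, rfl⟩ : IsUnit a := by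
    rw [norm_sub_rev] at h_norm
    simpa only [sub_sub_cancel] using isUnit_one_sub_of_norm_lt_one h_norm
  exact ⟨u, rfl, stmt_3_general A.toSubring J.asIdeal L hIA hIJ hIdense h_small h_quot u ha⟩
end

section
/- In the ideal–quotient setting, assume that I is dense in J with respect to the norm of B. If property (P_A) holds, then property (P_{A/I}) holds. -/
/-!
An element `a ∈ A` whose distance to `J` is less than `ε` is within `ε` of some `j ∈ A ∩ J`, because
`A ∩ J` is dense in `J`. Then `a - j` is a small element of `A`, so `1 + (a - j)` has an inverse in
`A`, and this inverse also inverts `1 + a` modulo `J`.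
-/

theorem exists_mem_dist_lt_of_infDist_lt {X : Type*} [PseudoMetricSpace X] {s t : Set X} {x : X}
    {ε : ℝ} (hs : s.Nonempty) (hst : s ⊆ closure t) (hx : Metric.infDist x s < ε) :
    ∃ y ∈ t, dist x y < ε := by
  have ht : t.Nonempty := closure_nonempty_iff.mp (hs.mono hst)
  have hxt : Metric.infDist x t < ε := calc
    Metric.infDist x t = Metric.infDist x (closure t) := Metric.infDist_closure.symm
    _ ≤ Metric.infDist x s := Metric.infDist_le_infDist_of_subset hst hs
    _ < ε := hx
  exact (Metric.infDist_lt_iff ht).mp hxt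

section NonAssocRing

variable {R : Type*} [NonAssocRing R] (J : TwoSidedIdeal R) {a b c : R}

theorem mul_rightInv_sub_one_mem (hac : a * c = 1) (hba : b - a ∈ J) : b * c - 1 ∈ J := by
  rw [← hac, ← sub_mul]
  exact J.mul_mem_right _ _ hba

theorem leftInv_mul_sub_one_mem (hca : c * a = 1) (hba : b - a ∈ J) : c * b - 1 ∈ J := by
  rw [← hca, ← mul_sub]
  exact J.mul_mem_left _ _ hba

end NonAssocRing

theorem stmt_4_general {B S : Type*} [SeminormedRing B] [SetLike S B] [AddSubgroupClass S B]
    (A : S) (J : TwoSidedIdeal B) (hdense : (J : Set B) ⊆ closure ((A : Set B) ∩ J)) {ε : ℝ}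
    (hA : ∀ x ∈ A, ‖x‖ < ε → ∃ u : Bˣ, (u : B) = 1 + x ∧ ((u⁻¹ : Bˣ) : B) ∈ A)
    {a : B} (ha : a ∈ A) (haJ : Metric.infDist a (J : Set B) < ε) :
    ∃ a₁ ∈ A, (1 + a) * a₁ - 1 ∈ J ∧ a₁ * (1 + a) - 1 ∈ J := by
  obtain ⟨j, ⟨hjA, hjJ⟩, haj⟩ := exists_mem_dist_lt_of_infDist_lt ⟨0, J.zero_mem⟩ hdense haJ
  obtain ⟨u, hu, huA⟩ := hA (a - j) (sub_mem ha hjA) (by rwa [← dist_eq_norm])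
  have hsub : 1 + a - u ∈ J := by
    have : 1 + a - u = j := by rw [hu]; abel
    rwa [this]
  exact ⟨_, huA, mul_rightInv_sub_one_mem J u.mul_inv hsub,
    leftInv_mul_sub_one_mem J u.inv_mul hsub⟩

/-- Theorem `thm4.02` (b), ideal–quotient setting: `B` a unital complex Banach algebra,
`J ⊊ B` a proper closed two-sided ideal, `A ⊆ B` a unital subalgebra, `I ⊆ A ∩ J` a
two-sided ring ideal of `A` which is dense in `J`.  If property `(P_A)` holds, then
property `(P_{A/I})` holds. -/
theorem stmt_4
    (B : Type*) [NormedRing B] [NormedAlgebra ℂ B] [CompleteSpace B]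
    (A : Subalgebra ℂ B)
    (J : TwoSidedIdeal B) (hJclosed : IsClosed (J : Set B))
    (hJproper : (J : Set B) ≠ Set.univ)
    (I : Set B) (hIA : I ⊆ (A : Set B)) (hIJ : ∀ x ∈ I, x ∈ J)
    (hI0 : (0 : B) ∈ I) (hIadd : ∀ x ∈ I, ∀ y ∈ I, x + y ∈ I)
    (hIneg : ∀ x ∈ I, -x ∈ I)
    (hIl : ∀ a ∈ A, ∀ x ∈ I, a * x ∈ I) (hIr : ∀ a ∈ A, ∀ x ∈ I, x * a ∈ I)
    (hIdense : (J : Set B) ⊆ closure I)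
    -- property (P_A)
    (hPA : ∃ ε > (0 : ℝ), ∀ x ∈ A, ‖x‖ < ε →
        ∃ u : Bˣ, (u : B) = 1 + x ∧ ((u⁻¹ : Bˣ) : B) ∈ A) :
    -- property (P_{A/I})
    ∃ ε > (0 : ℝ), ∀ a ∈ A, Metric.infDist a (J : Set B) < ε →
        ∃ a₁ ∈ A, (1 + a) * a₁ - 1 ∈ J ∧ a₁ * (1 + a) - 1 ∈ J := by
  obtain ⟨ε, hε, hA⟩ := hPA
  have hdense := hIdense.trans (closure_mono (Set.subset_inter hIA hIJ))
  exact ⟨ε, hε, fun _ ha haJ ↦ stmt_4_general A J hdense hA ha haJ⟩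
end

section
/- In the ideal–quotient setting, assume that I is dense in J and that A is dense in B, both with respect to the norm of B. If property (P_A) holds, then property (~P) holds. -/
/-!
Let `b` invert `a` modulo the closure of `I`. Then `1 = a * b - (a * b - 1)` is a limit of elements
`a * r - i` with `r ∈ A` and `i ∈ I`, so one of these is a unit of `A`, and modulo `I` it equals
`a * r`. Hence `a` has a right inverse in `A ⧸ I`; symmetrically it has a left inverse there.
-/

open Filter Topology

section DenseSubring

variable {R B : Type*} [Ring R] [TopologicalSpace R] [Ring B] [TopologicalSpace B]
  {f : R →+* B} {I : Ideal R} [I.IsTwoSided]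

theorem exists_mem_isUnit_quotient_mk_of_mem_closure [ContinuousSub B] (hf : IsInducing f)
    (hR : ∀ᶠ r in 𝓝 (1 : R), IsUnit r) {s : Set R} {x : B} (hxs : x ∈ closure (f '' s))
    (hxI : x - 1 ∈ closure (f '' I)) :
    ∃ r ∈ s, IsUnit (Ideal.Quotient.mk I r) := by
  have one_mem_closure : (1 : R) ∈ closure (Set.image2 (· - ·) s I) := by
    rw [hf.closure_eq_preimage_closure_image, Set.mem_preimage, map_one, ← sub_sub_cancel x 1]
    refine map_mem_closure₂ continuous_sub hxs hxI ?_
    rintro _ ⟨r, hr, rfl⟩ _ ⟨i, hi, rfl⟩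
    exact ⟨r - i, Set.mem_image2_of_mem hr hi, map_sub f r i⟩
  obtain ⟨_, hunit, r, hr, i, hi, rfl⟩ := mem_closure_iff_nhds.1 one_mem_closure _ hR
  have mk_sub : Ideal.Quotient.mk I (r - i) = Ideal.Quotient.mk I r := by
    rw [map_sub, Ideal.Quotient.eq_zero_iff_mem.2 hi, sub_zero]
  exact ⟨r, hr, mk_sub ▸ IsUnit.map (Ideal.Quotient.mk I) hunit⟩

theorem isUnit_quotient_mk_of_mul_sub_one_mem_closure [IsTopologicalRing B]
    (hf : IsDenseInducing f) (hR : ∀ᶠ r in 𝓝 (1 : R), IsUnit r) {a : R} {b : B}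
    (hab : f a * b - 1 ∈ closure (f '' I)) (hba : b * f a - 1 ∈ closure (f '' I)) :
    IsUnit (Ideal.Quotient.mk I a) := by
  have mul_mem_closure : f a * b ∈ closure (f '' Set.range (a * ·)) := by
    refine map_mem_closure (continuous_const_mul (f a)) (hf.dense b) ?_
    rintro _ ⟨r, rfl⟩
    exact ⟨a * r, ⟨r, rfl⟩, map_mul f a r⟩
  have mem_closure_mul : b * f a ∈ closure (f '' Set.range (· * a)) := by
    refine map_mem_closure (f := (· * f a)) (continuous_mul_const (f a)) (hf.dense b) ?_
    rintro _ ⟨l, rfl⟩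
    exact ⟨l * a, ⟨l, rfl⟩, map_mul f l a⟩
  obtain ⟨_, ⟨r, rfl⟩, hr⟩ :=
    exists_mem_isUnit_quotient_mk_of_mem_closure hf.isInducing hR mul_mem_closure hab
  obtain ⟨_, ⟨l, rfl⟩, hl⟩ :=
    exists_mem_isUnit_quotient_mk_of_mem_closure hf.isInducing hR mem_closure_mul hba
  obtain ⟨r', hr'⟩ := hr.exists_right_inv
  obtain ⟨l', hl'⟩ := hl.exists_left_inv
  rw [map_mul, mul_assoc] at hr'
  rw [map_mul, ← mul_assoc] at hl'
  exact isUnit_iff_exists_and_exists.2 ⟨⟨_, hr'⟩, ⟨_, hl'⟩⟩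

end DenseSubring

theorem isUnit_quotient_mk_iff {R : Type*} [Ring R] {I : Ideal R} [I.IsTwoSided] {a : R} :
    IsUnit (Ideal.Quotient.mk I a) ↔ ∃ c, a * c - 1 ∈ I ∧ c * a - 1 ∈ I := by
  simp only [isUnit_iff_exists, Ideal.Quotient.mk_surjective.exists, ← map_mul,
    ← map_one (Ideal.Quotient.mk I), Ideal.Quotient.mk_eq_mk_iff_sub_mem]

theorem eventually_isUnit_nhds_one {B : Type*} [Ring B] [TopologicalSpace B]
    [ContinuousSub B] {A : Subring B}
    (hA : ∀ᶠ x in 𝓝 (0 : B), x ∈ A → ∃ u : Bˣ, (u : B) = 1 + x ∧ ((u⁻¹ : Bˣ) : B) ∈ A) :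
    ∀ᶠ a in 𝓝 (1 : A), IsUnit a := by
  have tendsto_sub_one : Tendsto (fun a : A ↦ (a : B) - 1) (𝓝 1) (𝓝 0) :=
    Continuous.tendsto' (by fun_prop) _ _ (by simp)
  filter_upwards [tendsto_sub_one.eventually hA] with a ha
  obtain ⟨u, hu, hu_inv⟩ := ha (A.sub_mem a.2 A.one_mem)
  rw [add_sub_cancel] at hu
  refine isUnit_iff_exists.2 ⟨⟨_, hu_inv⟩, Subtype.ext ?_, Subtype.ext ?_⟩ <;> simp [← hu]

theorem stmt_5_general {B : Type*} [Ring B] [TopologicalSpace B] [IsTopologicalRing B]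
    (A : Subring B) (I : Set B) (hIA : I ⊆ (A : Set B))
    (hI0 : (0 : B) ∈ I) (hIadd : ∀ x ∈ I, ∀ y ∈ I, x + y ∈ I)
    (hIl : ∀ a ∈ A, ∀ x ∈ I, a * x ∈ I) (hIr : ∀ a ∈ A, ∀ x ∈ I, x * a ∈ I)
    (hAdense : Dense (A : Set B))
    (hPA : ∀ᶠ x in 𝓝 (0 : B), x ∈ A → ∃ u : Bˣ, (u : B) = 1 + x ∧ ((u⁻¹ : Bˣ) : B) ∈ A) :
    ∀ a ∈ A, (∃ b : B, a * b - 1 ∈ closure I ∧ b * a - 1 ∈ closure I) →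
      ∃ a₁ ∈ A, a * a₁ - 1 ∈ I ∧ a₁ * a - 1 ∈ I := by
  rintro a ha ⟨b, hab, hba⟩
  let K : Ideal A :=
    { carrier := Subtype.val ⁻¹' I
      add_mem' := fun hx hy ↦ hIadd _ hx _ hy
      zero_mem' := hI0
      smul_mem' := fun c x hx ↦ hIl c c.2 x hx }
  have : K.IsTwoSided := ⟨fun c hx ↦ hIr c c.2 _ hx⟩
  have image_K : A.subtype '' K = I :=
    (Subtype.image_preimage_coe _ _).trans (Set.inter_eq_right.2 hIA)
  rw [← image_K] at hab hba
  have isUnit_mk_a : IsUnit (Ideal.Quotient.mk K ⟨a, ha⟩) :=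
    isUnit_quotient_mk_of_mul_sub_one_mem_closure hAdense.isDenseInducing_val
      (eventually_isUnit_nhds_one hPA) hab hba
  obtain ⟨c, hac, hca⟩ := isUnit_quotient_mk_iff.1 isUnit_mk_a
  exact ⟨c, c.2, hac, hca⟩

/-- Theorem `thm4.02` (c), ideal–quotient setting: `B` a unital complex Banach algebra,
`J ⊊ B` a proper closed two-sided ideal, `A ⊆ B` a unital subalgebra, `I ⊆ A ∩ J` a
two-sided ring ideal of `A`.  If `I` is dense in `J`, `A` is dense in `B`, and property
`(P_A)` holds, then property `(~P)` holds. -/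
theorem stmt_5
    (B : Type*) [NormedRing B] [NormedAlgebra ℂ B] [CompleteSpace B]
    (A : Subalgebra ℂ B)
    (J : TwoSidedIdeal B) (hJclosed : IsClosed (J : Set B))
    (hJproper : (J : Set B) ≠ Set.univ)
    (I : Set B) (hIA : I ⊆ (A : Set B)) (hIJ : ∀ x ∈ I, x ∈ J)
    (hI0 : (0 : B) ∈ I) (hIadd : ∀ x ∈ I, ∀ y ∈ I, x + y ∈ I)
    (hIneg : ∀ x ∈ I, -x ∈ I)
    (hIl : ∀ a ∈ A, ∀ x ∈ I, a * x ∈ I) (hIr : ∀ a ∈ A, ∀ x ∈ I, x * a ∈ I)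
    (hIdense : (J : Set B) ⊆ closure I)
    (hAdense : Dense (A : Set B))
    -- property (P_A)
    (hPA : ∃ ε > (0 : ℝ), ∀ x ∈ A, ‖x‖ < ε →
        ∃ u : Bˣ, (u : B) = 1 + x ∧ ((u⁻¹ : Bˣ) : B) ∈ A) :
    -- property (~P)
    ∀ a ∈ A, (∃ b : B, a * b - 1 ∈ J ∧ b * a - 1 ∈ J) →
        ∃ a₁ ∈ A, a * a₁ - 1 ∈ I ∧ a₁ * a - 1 ∈ I := by
  rintro a ha ⟨b, hab, hba⟩
  exact stmt_5_general A.toSubring I hIA hI0 hIadd hIl hIr hAdense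
    (by simpa [Metric.eventually_nhds_iff, imp.swap] using hPA) a ha ⟨b, hIdense hab, hIdense hba⟩
end

section
/- In the ideal–quotient setting, property (~P) implies property (P_{A/I}). Moreover, if in addition A ∩ J = I (so the induced map A/I → B/J is injective) and A + J is dense in B (so the induced map has dense range in the quotient Banach algebra B/J), then property (P_{A/I}) holds if and only if property (~P) holds. -/
/-!
If `a` is within distance `1` of `J`, then `1 + a` differs by an element of `J` from `1 - x` with
`‖x‖ < 1`, which the Neumann series inverts; so `(~P)` gives `(P_{A/I})` with `ε = 1`.

Conversely, let `b` invert `a ∈ A` modulo `J`. By density `b` is approximated by some `a' ∈ A`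
modulo `J`, so that `a * a'` is close to `1` modulo `J` and `(P_{A/I})` inverts it by some
`a₁ ∈ A`. Then `a' * a₁` is a right inverse of `a` modulo `J`, hence a two-sided one because `a` is
invertible modulo `J`.
-/

section Definitions

variable {R : Type*} [Ring R]

/-- `b` is a two-sided inverse of `a` modulo the subset `S`, which is a plain set so that both
ideals of `R` and ideals of a subring of `R` are covered. -/
def IsInverseMod (S : Set R) (a b : R) : Prop :=
  a * b - 1 ∈ S ∧ b * a - 1 ∈ S

/-- Property `(~P)`: the elements of `A` which are invertible modulo `J` in the whole ring are
invertible modulo `I` in `A`. -/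
def InverseClosedMod (A I J : Set R) : Prop :=
  ∀ a ∈ A, (∃ b, IsInverseMod J a b) → ∃ a₁ ∈ A, IsInverseMod I a a₁

/-- Property `(P_{A/I})`: the elements of `A` sufficiently close to `1` modulo `J` are invertible
modulo `J` in `A`. Such an element is written `1 + a` with `a ∈ A` close to `J`. -/
def InvertibleNearOneMod {B : Type*} [SeminormedRing B] (A J : Set B) : Prop :=
  ∃ ε > (0 : ℝ), ∀ a ∈ A, Metric.infDist a J < ε → ∃ a₁ ∈ A, IsInverseMod J (1 + a) a₁

end Definitions

section Algebra

variable {R : Type*} [Ring R] {J : TwoSidedIdeal R}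

theorem isInverseMod_units_add (u : Rˣ) {j : R} (hj : j ∈ J) :
    IsInverseMod (J : Set R) (u + j) ↑u⁻¹ := by
  constructor
  · rw [add_mul, Units.mul_inv, add_sub_cancel_left]
    exact J.mul_mem_right _ _ hj
  · rw [mul_add, Units.inv_mul, add_sub_cancel_left]
    exact J.mul_mem_left _ _ hj

theorem isInverseMod_of_left_of_right {a b r : R} (hb : b * a - 1 ∈ J) (hr : a * r - 1 ∈ J) :
    IsInverseMod (J : Set R) a r := by
  have hrb : r - b ∈ J := by
    have : r - b = b * (a * r - 1) - (b * a - 1) * r := by noncomm_ring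
    rw [this]
    exact J.sub_mem (J.mul_mem_left _ _ hr) (J.mul_mem_right _ _ hb)
  have hra : r * a - 1 ∈ J := by
    have : r * a - 1 = (r - b) * a + (b * a - 1) := by noncomm_ring
    rw [this]
    exact J.add_mem (J.mul_mem_right _ _ hrb) hb
  exact ⟨hr, hra⟩

end Algebra

section Distance

theorem infDist_add_of_mem {E S : Type*} [SeminormedAddCommGroup E] [SetLike S E]
    [AddSubgroupClass S E] {H : S} (x : E) {h : E} (hh : h ∈ H) :
    Metric.infDist (x + h) (H : Set E) = Metric.infDist x (H : Set E) := by
  have himage : (· + h) '' (H : Set E) = H := by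
    ext y
    simp [add_mem_cancel_right, hh]
  simpa only [himage] using
    Metric.infDist_image (isometry_add_right h) (x := x) (t := (H : Set E))

theorem exists_isInverseMod_one_add_of_infDist_lt_one {B : Type*} [NormedRing B]
    [HasSummableGeomSeries B] {J : TwoSidedIdeal B} {a : B}
    (ha : Metric.infDist a (J : Set B) < 1) : ∃ b, IsInverseMod (J : Set B) (1 + a) b := by
  obtain ⟨j, hj, haj⟩ := (Metric.infDist_lt_iff ⟨0, J.zero_mem⟩).1 ha
  have hnorm : ‖j - a‖ < 1 := by rwa [dist_comm, dist_eq_norm] at haj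
  obtain ⟨u, hu⟩ := isUnit_one_sub_of_norm_lt_one hnorm
  have hdecomp : 1 + a = u + j := by rw [hu]; abel
  exact ⟨_, hdecomp ▸ isInverseMod_units_add u hj⟩

theorem exists_mem_infDist_mul_sub_one_lt {B : Type*} [SeminormedRing B] {J : TwoSidedIdeal B}
    {A : Set B} (hdense : Dense {x : B | ∃ a ∈ A, ∃ j ∈ J, x = a + j}) {a b : B}
    (hab : a * b - 1 ∈ J) {ε : ℝ} (hε : 0 < ε) :
    ∃ a' ∈ A, Metric.infDist (a * a' - 1) (J : Set B) < ε := by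
  have hopen : IsOpen {x : B | Metric.infDist (a * x - 1) (J : Set B) < ε} :=
    isOpen_lt ((Metric.continuous_infDist_pt _).comp (by fun_prop)) continuous_const
  have hb : Metric.infDist (a * b - 1) (J : Set B) < ε := by
    rwa [Metric.infDist_zero_of_mem hab]
  obtain ⟨_, ⟨a', ha', j, hj, rfl⟩, hlt⟩ := hdense.exists_mem_open hopen ⟨b, hb⟩
  have hshift : a * (a' + j) - 1 = (a * a' - 1) + a * j := by noncomm_ring
  rw [Set.mem_ofPred_eq, hshift, infDist_add_of_mem _ (J.mul_mem_left _ _ hj)] at hlt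
  exact ⟨a', ha', hlt⟩

end Distance

section Properties

theorem InvertibleNearOneMod.inverseClosedMod {B S : Type*} [SeminormedRing B] [SetLike S B]
    [SubringClass S B] {A : S} {J : TwoSidedIdeal B} {I : Set B} (hAJ : (A : Set B) ∩ J ⊆ I)
    (hdense : Dense {x : B | ∃ a ∈ A, ∃ j ∈ J, x = a + j})
    (h : InvertibleNearOneMod (A : Set B) J) : InverseClosedMod (A : Set B) I J := by
  obtain ⟨ε, hε, hinv⟩ := h
  rintro a ha ⟨b, hab, hba⟩
  obtain ⟨a', ha', hdist⟩ := exists_mem_infDist_mul_sub_one_lt (A := A) hdense hab hε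
  obtain ⟨a₁, ha₁, hright, -⟩ := hinv _ (sub_mem (mul_mem ha ha') (one_mem A)) hdist
  have hmem : a' * a₁ ∈ A := mul_mem ha' ha₁
  rw [add_sub_cancel, mul_assoc] at hright
  obtain ⟨hr, hl⟩ := isInverseMod_of_left_of_right hba hright
  exact ⟨a' * a₁, hmem, hAJ ⟨sub_mem (mul_mem ha hmem) (one_mem A), hr⟩,
    hAJ ⟨sub_mem (mul_mem hmem ha) (one_mem A), hl⟩⟩

variable {B S : Type*} [NormedRing B] [HasSummableGeomSeries B] [SetLike S B]
  [SubringClass S B] {A : S} {J : TwoSidedIdeal B} {I : Set B}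

theorem InverseClosedMod.invertibleNearOneMod (hIJ : I ⊆ J)
    (h : InverseClosedMod (A : Set B) I J) : InvertibleNearOneMod (A : Set B) J := by
  refine ⟨1, one_pos, fun a ha hdist => ?_⟩
  obtain ⟨a₁, ha₁, hright, hleft⟩ :=
    h (1 + a) (add_mem (one_mem A) ha) (exists_isInverseMod_one_add_of_infDist_lt_one hdist)
  exact ⟨a₁, ha₁, hIJ hright, hIJ hleft⟩

theorem stmt_7_general (hIJ : I ⊆ J) :
    (InverseClosedMod (A : Set B) I J → InvertibleNearOneMod (A : Set B) J) ∧
      ((A : Set B) ∩ J ⊆ I → Dense {x : B | ∃ a ∈ A, ∃ j ∈ J, x = a + j} →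
        (InvertibleNearOneMod (A : Set B) J ↔ InverseClosedMod (A : Set B) I J)) :=
  ⟨fun h => h.invertibleNearOneMod hIJ, fun hAJ hdense =>
    ⟨fun h => h.inverseClosedMod hAJ hdense, fun h => h.invertibleNearOneMod hIJ⟩⟩

end Properties

/-- Theorem `thm4.02` (e), ideal–quotient setting: property `(~P)` implies property
`(P_{A/I})`; moreover, if the induced map `A/I → B/J` is injective (`A ∩ J = I`) and has
dense range (`A + J` dense in `B`), then `(P_{A/I})` holds if and only if `(~P)` holds. -/
theorem stmt_7
    (B : Type*) [NormedRing B] [NormedAlgebra ℂ B] [CompleteSpace B]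
    (A : Subalgebra ℂ B)
    (J : TwoSidedIdeal B) (hJclosed : IsClosed (J : Set B))
    (hJproper : (J : Set B) ≠ Set.univ)
    (I : Set B) (hIA : I ⊆ (A : Set B)) (hIJ : ∀ x ∈ I, x ∈ J)
    (hI0 : (0 : B) ∈ I) (hIadd : ∀ x ∈ I, ∀ y ∈ I, x + y ∈ I)
    (hIneg : ∀ x ∈ I, -x ∈ I)
    (hIl : ∀ a ∈ A, ∀ x ∈ I, a * x ∈ I) (hIr : ∀ a ∈ A, ∀ x ∈ I, x * a ∈ I) :
    -- (~P) implies (P_{A/I})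
    ((∀ a ∈ A, (∃ b : B, a * b - 1 ∈ J ∧ b * a - 1 ∈ J) →
        ∃ a₁ ∈ A, a * a₁ - 1 ∈ I ∧ a₁ * a - 1 ∈ I) →
      (∃ ε > (0 : ℝ), ∀ a ∈ A, Metric.infDist a (J : Set B) < ε →
        ∃ a₁ ∈ A, (1 + a) * a₁ - 1 ∈ J ∧ a₁ * (1 + a) - 1 ∈ J)) ∧
    -- if `A ∩ J = I` and `A + J` is dense in `B`, then (P_{A/I}) ↔ (~P)
    (((A : Set B) ∩ (J : Set B) = I) →
      Dense {x : B | ∃ a ∈ A, ∃ j ∈ J, x = a + j} →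
      ((∃ ε > (0 : ℝ), ∀ a ∈ A, Metric.infDist a (J : Set B) < ε →
          ∃ a₁ ∈ A, (1 + a) * a₁ - 1 ∈ J ∧ a₁ * (1 + a) - 1 ∈ J) ↔
        (∀ a ∈ A, (∃ b : B, a * b - 1 ∈ J ∧ b * a - 1 ∈ J) →
          ∃ a₁ ∈ A, a * a₁ - 1 ∈ I ∧ a₁ * a - 1 ∈ I))) := by
  have ⟨hforward, hiff⟩ := stmt_7_general (A := A) (J := J) hIJ
  exact ⟨hforward, fun hAJ hdense => hiff hAJ.subset hdense⟩
end

section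
/- Let B be a unital C*-algebra with unit e, let J ⊊ B be a proper closed two-sided ideal with J* = J, let A ⊆ B be a subalgebra with e ∈ A and A* = A, and let I ⊆ A be a two-sided ideal of the ring A with I ⊆ J and I* = I. Assume I is dense in J. If (i) every element of ℂ·e + I that is invertible in the algebra ℂ·e + J has its inverse in ℂ·e + I, and (ii) for every a ∈ A the existence of b ∈ B with ab − e ∈ J and ba − e ∈ J implies the existence of a₁ ∈ A with a·a₁ − e ∈ I and a₁·a − e ∈ I, then A is spectrally invariant in B: every a ∈ A that is invertible in B has its inverse in A. -/
/-!
Let `u` be a unit of `R` lying in `A`, and let `b ∈ A` be a right inverse of `u` modulo `I`. Then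
`u⁻¹ - b = -u⁻¹ * (u * b - 1)` lies in the closure of `I`, so, the units being open, some
`w ∈ b + I` is a unit. The unit `v = u * w` lies in `1 + I`, where inverses are already known to
stay in `A`, and `u⁻¹ = w * v⁻¹`.
-/

/-- A subset `S` of a monoid is spectrally invariant (inverse-closed) if it contains the inverse of
each of its elements that is invertible in the whole monoid. -/
def IsSpectrallyInvariant {M : Type*} [Monoid M] (S : Set M) : Prop :=
  ∀ u : Mˣ, (u : M) ∈ S → ((u⁻¹ : Mˣ) : M) ∈ S

theorem val_inv_mem_of_mul_eq {M S : Type*} [Monoid M] [SetLike S M] [MulMemClass S M] {A : S}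
    {u v : Mˣ} {w : M} (hw : w ∈ A) (hv : ((v⁻¹ : Mˣ) : M) ∈ A) (huw : u * w = v) :
    ((u⁻¹ : Mˣ) : M) ∈ A := by
  have hu : ((u⁻¹ : Mˣ) : M) = w * (v⁻¹ : Mˣ) := by
    rw [Units.eq_mul_inv_iff_mul_eq, ← huw, Units.inv_mul_cancel_left]
  exact hu ▸ mul_mem hw hv

theorem val_inv_sub_one_mem {R : Type*} [Ring R] {J : Ideal R} {v : Rˣ}
    (hv : (v : R) - 1 ∈ J) : ((v⁻¹ : Rˣ) : R) - 1 ∈ J := by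
  have h : ((v⁻¹ : Rˣ) : R) - 1 = -((v⁻¹ : Rˣ) * ((v : R) - 1)) := by
    rw [mul_sub, Units.inv_mul, mul_one, neg_sub]
  exact h ▸ J.neg_mem (J.mul_mem_left _ hv)

theorem exists_mem_isUnit_add {R : Type*} [Semiring R] [TopologicalSpace R] [ContinuousAdd R]
    (hunits : IsOpen {x : R | IsUnit x}) {S : Set R} {b y : R} (hy : y ∈ closure S)
    (hby : IsUnit (b + y)) : ∃ z ∈ S, IsUnit (b + z) := by
  have hopen : IsOpen {z : R | IsUnit (b + z)} := hunits.preimage (continuous_const_add b)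
  obtain ⟨z, hz, hzS⟩ := mem_closure_iff.mp hy _ hopen hby
  exact ⟨z, hzS, hz⟩

section

variable {𝕜 R : Type*} [CommSemiring 𝕜] [Ring R] [Algebra 𝕜 R] [TopologicalSpace R]
  [ContinuousAdd R]

theorem isSpectrallyInvariant_of_exists_mul_sub_one_mem (hunits : IsOpen {x : R | IsUnit x})
    {A : Subalgebra 𝕜 R} {I : Submodule A R} (hIA : (I : Set R) ⊆ A)
    (hI : ∀ r : R, ∀ x ∈ I, r * x ∈ closure (I : Set R))
    (hone : ∀ v : Rˣ, (v : R) - 1 ∈ I → ((v⁻¹ : Rˣ) : R) ∈ A)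
    (hA : ∀ u : Rˣ, (u : R) ∈ A → ∃ b ∈ A, u * b - 1 ∈ I) :
    IsSpectrallyInvariant (A : Set R) := by
  intro u hu
  obtain ⟨b, hbA, hb⟩ := hA u hu
  have hinv : b + (-(u⁻¹ : Rˣ)) * (u * b - 1) = (u⁻¹ : Rˣ) := by
    rw [neg_mul, mul_sub, Units.inv_mul_cancel_left, mul_one]
    abel
  obtain ⟨z, hz, w, hw⟩ := exists_mem_isUnit_add hunits (hI _ _ hb) (hinv ▸ Units.isUnit u⁻¹)
  have hwA : (w : R) ∈ A := hw ▸ A.add_mem hbA (hIA hz)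
  have huw : ((u * w : Rˣ) : R) - 1 ∈ I := by
    have h : ((u * w : Rˣ) : R) - 1 = (u * b - 1) + u * z := by
      rw [Units.val_mul, hw, mul_add]
      abel
    exact h ▸ I.add_mem hb (I.smul_mem ⟨u, hu⟩ hz)
  exact val_inv_mem_of_mul_eq hwA (hone _ huw) (Units.val_mul u w).symm

theorem stmt_8_general (hunits : IsOpen {x : R | IsUnit x})
    (A : Subalgebra 𝕜 R) (J : Ideal R) (I : Submodule A R)
    (hIA : (I : Set R) ⊆ A) (hIJ : ∀ x ∈ I, x ∈ J) (hIdense : (J : Set R) ⊆ closure I)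
    (hi : ∀ (c : 𝕜), ∀ x ∈ I, ∀ w : R,
        ((c • (1 : R) + x) * w = 1 ∧ w * (c • (1 : R) + x) = 1) →
        (∃ d : 𝕜, ∃ y ∈ J, w = d • (1 : R) + y) →
        ∃ d : 𝕜, ∃ y ∈ I, w = d • (1 : R) + y)
    (hii : ∀ a ∈ A, (∃ b : R, a * b - 1 ∈ J ∧ b * a - 1 ∈ J) → ∃ b ∈ A, a * b - 1 ∈ I) :
    IsSpectrallyInvariant (A : Set R) := by
  refine isSpectrallyInvariant_of_exists_mul_sub_one_mem hunits hIA
    (fun r x hx ↦ hIdense (J.mul_mem_left r (hIJ x hx))) (fun v hv ↦ ?_)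
    (fun u hu ↦ hii u hu ⟨(u⁻¹ : Rˣ), by simp, by simp⟩)
  obtain ⟨d, y, hy, hvy⟩ := hi 1 (v - 1) hv (v⁻¹ : Rˣ) (by simp)
    ⟨1, (v⁻¹ : Rˣ) - 1, val_inv_sub_one_mem (hIJ _ hv), by simp⟩
  exact hvy ▸ A.add_mem (A.smul_mem A.one_mem d) (hIA hy)

end

/-- Corollary `coreins`: `B` a unital C*-algebra, `J ⊊ B` a proper closed two-sided
*-ideal, `A ⊆ B` a symmetric unital subalgebra, `I ⊆ A ∩ J` a symmetric two-sided ring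
ideal of `A` which is dense in `J`.  If (i) `ℂ·e + I` is spectrally invariant in
`ℂ·e + J`, and (ii) classes in `A/I` invertible modulo `J` are invertible modulo `I`
(`φ⁻¹((B/J)⁻¹) = (A/I)⁻¹`), then `A` is spectrally invariant in `B`. -/
theorem stmt_8
    (B : Type*) [NormedRing B] [StarRing B] [CStarRing B]
    [NormedAlgebra ℂ B] [StarModule ℂ B] [CompleteSpace B]
    (A : Subalgebra ℂ B) (hAstar : ∀ a ∈ A, star a ∈ A)
    (J : TwoSidedIdeal B) (hJclosed : IsClosed (J : Set B))
    (hJproper : (J : Set B) ≠ Set.univ) (hJstar : ∀ x ∈ J, star x ∈ J)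
    (I : Set B) (hIA : I ⊆ (A : Set B)) (hIJ : ∀ x ∈ I, x ∈ J)
    (hIstar : ∀ x ∈ I, star x ∈ I)
    (hI0 : (0 : B) ∈ I) (hIadd : ∀ x ∈ I, ∀ y ∈ I, x + y ∈ I)
    (hIneg : ∀ x ∈ I, -x ∈ I)
    (hIl : ∀ a ∈ A, ∀ x ∈ I, a * x ∈ I) (hIr : ∀ a ∈ A, ∀ x ∈ I, x * a ∈ I)
    (hIdense : (J : Set B) ⊆ closure I)
    -- (i): `ℂ·e + I` is spectrally invariant in `ℂ·e + J`
    (hi : ∀ (c : ℂ), ∀ x ∈ I, ∀ w : B,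
        ((c • (1 : B) + x) * w = 1 ∧ w * (c • (1 : B) + x) = 1) →
        (∃ d : ℂ, ∃ y ∈ J, w = d • (1 : B) + y) →
        ∃ d : ℂ, ∃ y ∈ I, w = d • (1 : B) + y)
    -- (ii): `φ⁻¹((B/J)⁻¹) = (A/I)⁻¹`
    (hii : ∀ a ∈ A, (∃ b : B, a * b - 1 ∈ J ∧ b * a - 1 ∈ J) →
        ∃ a₁ ∈ A, a * a₁ - 1 ∈ I ∧ a₁ * a - 1 ∈ I) :
    -- `A` is spectrally invariant in `B`
    ∀ a ∈ A, ∀ u : Bˣ, (u : B) = a → ((u⁻¹ : Bˣ) : B) ∈ A := by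
  let I' : Submodule A B := ⟨⟨⟨I, @fun x y hx ↦ hIadd x hx y⟩, hI0⟩, fun a x ↦ hIl a a.2 x⟩
  exact fun a ha u hu ↦ stmt_8_general Units.isOpen A J.asIdeal I' hIA hIJ hIdense hi
    (fun b hb h ↦ (hii b hb h).imp fun _ h ↦ ⟨h.1, h.2.1⟩) u (hu ▸ ha)
end

section
/- For all f, g ∈ 𝒮(ℝ, A) and all i, j ∈ ℕ, the twisted convolution f * g is a smooth A-valued function whose j-th derivative at t equals ∫_ℝ f(s)·α_s(g^{(j)}(t − s)) ds, and one has the estimate ‖f * g‖_{i,j} ≤ C · Σ_{β+γ=i} (i choose β) · (‖f‖_{β,0} + ‖f‖_{β+M,0}) · ‖g‖_{γ,j}. -/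
/-!
Put `K(s) = f(s) α_s(·)`, so that `(f * g)(t) = ∫ K(s) g(t - s) ds` for an operator-valued kernel
with `‖K(s)‖ ≤ k(s) := C (1 + |s|^M) ‖f(s)‖`. All moments of `k` are finite, so one differentiates
under the integral, each derivative falling on `g`. Since `|t|^i ≤ (|s| + |t - s|)^i`, the binomial
theorem bounds `|t|^i ‖(K * g)(t)‖` by a sum of scalar convolutions of moments of `k` and of `‖g‖`,
and the integral of a convolution is the product of the integrals.
-/

open MeasureTheory Finset ContinuousLinearMap
open scoped Convolution ContDiff

section Moments

variable {G : Type*} [SeminormedAddCommGroup G] [MeasurableSpace G] {μ : Measure G}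
  {k h : G → ℝ} {i : ℕ}

theorem norm_pow_mul_convolution_le (hk : ∀ s, 0 ≤ k s) (hh : ∀ s, 0 ≤ h s) {t : G}
    (hkh : ∀ b ≤ i, ConvolutionExistsAt (fun s ↦ ‖s‖ ^ b * k s) (fun s ↦ ‖s‖ ^ (i - b) * h s) t
      (mul ℝ ℝ) μ) :
    ‖t‖ ^ i * (k ⋆[mul ℝ ℝ, μ] h) t ≤ ∑ b ∈ range (i + 1), (i.choose b : ℝ) *
      ((fun s ↦ ‖s‖ ^ b * k s) ⋆[mul ℝ ℝ, μ] (fun s ↦ ‖s‖ ^ (i - b) * h s)) t := by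
  have hint : ∀ b ∈ range (i + 1), Integrable (fun s ↦ (i.choose b : ℝ) *
      ((‖s‖ ^ b * k s) * (‖t - s‖ ^ (i - b) * h (t - s)))) μ := fun b hb ↦
    (hkh b (mem_range_succ_iff.mp hb)).const_mul _
  have hbinomial : ∀ s, ‖t‖ ^ i * (k s * h (t - s)) ≤ ∑ b ∈ range (i + 1), (i.choose b : ℝ) *
      ((‖s‖ ^ b * k s) * (‖t - s‖ ^ (i - b) * h (t - s))) := fun s ↦
    calc ‖t‖ ^ i * (k s * h (t - s))
        ≤ (‖s‖ + ‖t - s‖) ^ i * (k s * h (t - s)) := by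
          have := mul_nonneg (hk s) (hh (t - s))
          gcongr
          exact norm_le_norm_add_norm_sub' t s
      _ = _ := by
          rw [add_pow, sum_mul]
          exact sum_congr rfl fun b _ ↦ by ring
  calc ‖t‖ ^ i * (k ⋆[mul ℝ ℝ, μ] h) t
      = ∫ s, ‖t‖ ^ i * (k s * h (t - s)) ∂μ := (integral_const_mul _ _).symm
    _ ≤ ∫ s, ∑ b ∈ range (i + 1), (i.choose b : ℝ) *
          ((‖s‖ ^ b * k s) * (‖t - s‖ ^ (i - b) * h (t - s))) ∂μ :=
        integral_mono_of_nonneg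
          (.of_forall fun s ↦ mul_nonneg (by positivity) (mul_nonneg (hk s) (hh (t - s))))
          (integrable_finsetSum _ hint) (.of_forall hbinomial)
    _ = _ := by
        rw [integral_finsetSum _ hint]
        exact sum_congr rfl fun b _ ↦ integral_const_mul _ _

theorem integral_norm_pow_mul_le_of_le_convolution [MeasurableAdd₂ G] [MeasurableNeg G]
    [SFinite μ] [μ.IsAddRightInvariant] (hk : ∀ s, 0 ≤ k s) (hh : ∀ s, 0 ≤ h s)
    (hk_int : ∀ b ≤ i, Integrable (fun s ↦ ‖s‖ ^ b * k s) μ)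
    (hh_int : ∀ c ≤ i, Integrable (fun s ↦ ‖s‖ ^ c * h s) μ)
    {u : G → ℝ} (hu : ∀ t, 0 ≤ u t) (hu_le : ∀ᵐ t ∂μ, u t ≤ (k ⋆[mul ℝ ℝ, μ] h) t) :
    ∫ t, ‖t‖ ^ i * u t ∂μ ≤ ∑ b ∈ range (i + 1), (i.choose b : ℝ) *
      ((∫ s, ‖s‖ ^ b * k s ∂μ) * ∫ s, ‖s‖ ^ (i - b) * h s ∂μ) := by
  have hexists : ∀ᵐ t ∂μ, ∀ b ≤ i, ConvolutionExistsAt (fun s ↦ ‖s‖ ^ b * k s)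
      (fun s ↦ ‖s‖ ^ (i - b) * h s) t (mul ℝ ℝ) μ := by
    simp only [ae_all_iff]
    exact fun b hb ↦ (hk_int b hb).ae_convolution_exists _ (hh_int _ (i.sub_le b))
  have hint : ∀ b ∈ range (i + 1), Integrable (fun t ↦ (i.choose b : ℝ) *
      ((fun s ↦ ‖s‖ ^ b * k s) ⋆[mul ℝ ℝ, μ] (fun s ↦ ‖s‖ ^ (i - b) * h s)) t) μ := fun b hb ↦
    ((hk_int b (mem_range_succ_iff.mp hb)).integrable_convolution _
      (hh_int _ (i.sub_le b))).const_mul _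
  calc ∫ t, ‖t‖ ^ i * u t ∂μ
      ≤ ∫ t, ∑ b ∈ range (i + 1), (i.choose b : ℝ) *
          ((fun s ↦ ‖s‖ ^ b * k s) ⋆[mul ℝ ℝ, μ] (fun s ↦ ‖s‖ ^ (i - b) * h s)) t ∂μ := by
        refine integral_mono_of_nonneg (.of_forall fun t ↦ mul_nonneg (by positivity) (hu t))
          (integrable_finsetSum _ hint) ?_
        filter_upwards [hu_le, hexists] with t hut ht
        exact (mul_le_mul_of_nonneg_left hut (by positivity)).trans
          (norm_pow_mul_convolution_le hk hh ht)
    _ = _ := by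
        rw [integral_finsetSum _ hint]
        refine sum_congr rfl fun b hb ↦ ?_
        rw [integral_const_mul, integral_convolution _ (hk_int b (mem_range_succ_iff.mp hb))
          (hh_int _ (i.sub_le b)), mul_apply']

end Moments

section OperatorConvolution

variable {G E F : Type*} [NormedAddCommGroup E] [NormedSpace ℝ E] [NormedAddCommGroup F]
  [NormedSpace ℝ F]

/-- The convolution `t ↦ ∫ K(s) g(t - s) dμ(s)` of an operator-valued kernel `K` with a
vector-valued function `g`. `MeasureTheory.convolution` is not used here because its theory needs
`K` to be measurable in operator norm, whereas the orbits `s ↦ α_s a` of a strongly continuous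
group only give measurability of `s ↦ K(s) x` for each vector `x`. -/
noncomputable def operatorConvolution [Sub G] [MeasurableSpace G] (K : G → E →L[ℝ] F) (g : G → E)
    (μ : Measure G) (t : G) : F :=
  ∫ s, K s (g (t - s)) ∂μ

theorem stronglyMeasurable_clm_apply_of_continuous {X : Type*} [TopologicalSpace X]
    [TopologicalSpace.MetrizableSpace X] [SecondCountableTopology X] [MeasurableSpace X]
    [OpensMeasurableSpace X] {K : X → E →L[ℝ] F} (hK : ∀ x, StronglyMeasurable fun s ↦ K s x)
    {φ : X → E} (hφ : Continuous φ) : StronglyMeasurable fun s ↦ K s (φ s) :=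
  (stronglyMeasurable_uncurry_of_continuous_of_stronglyMeasurable (u := fun r s ↦ K s (φ r))
    (fun s ↦ (K s).continuous.comp hφ) fun r ↦ hK (φ r)).comp_measurable
      (measurable_id.prodMk measurable_id)

theorem norm_operatorConvolution_le [AddGroup G] [MeasurableSpace G] {μ : Measure G}
    {K : G → E →L[ℝ] F} {k : G → ℝ} (hK : ∀ s, ‖K s‖ ≤ k s) {g : G → E} {t : G}
    (hkg : ConvolutionExistsAt k (fun s ↦ ‖g s‖) t (mul ℝ ℝ) μ) :
    ‖operatorConvolution K g μ t‖ ≤ (k ⋆[mul ℝ ℝ, μ] fun s ↦ ‖g s‖) t :=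
  norm_integral_le_of_norm_le hkg (.of_forall fun s ↦ (K s).le_of_opNorm_le (hK s) _)

theorem integral_norm_pow_mul_norm_operatorConvolution_le [SeminormedAddCommGroup G]
    [MeasurableSpace G] [MeasurableAdd₂ G] [MeasurableNeg G] {μ : Measure G} [SFinite μ]
    [μ.IsAddRightInvariant] {K : G → E →L[ℝ] F} {k : G → ℝ} (hK : ∀ s, ‖K s‖ ≤ k s) {g : G → E}
    {i : ℕ} (hk : ∀ b ≤ i, Integrable (fun s ↦ ‖s‖ ^ b * k s) μ)
    (hg : ∀ c ≤ i, Integrable (fun s ↦ ‖s‖ ^ c * ‖g s‖) μ) :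
    ∫ t, ‖t‖ ^ i * ‖operatorConvolution K g μ t‖ ∂μ ≤ ∑ b ∈ range (i + 1), (i.choose b : ℝ) *
      ((∫ s, ‖s‖ ^ b * k s ∂μ) * ∫ s, ‖s‖ ^ (i - b) * ‖g s‖ ∂μ) := by
  have hexists : ∀ᵐ t ∂μ, ConvolutionExistsAt k (fun s ↦ ‖g s‖) t (mul ℝ ℝ) μ :=
    Integrable.ae_convolution_exists _ (by simpa using hk 0 i.zero_le)
      (by simpa using hg 0 i.zero_le)
  exact integral_norm_pow_mul_le_of_le_convolution (fun s ↦ (norm_nonneg _).trans (hK s))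
    (fun s ↦ norm_nonneg _) hk hg (fun t ↦ norm_nonneg _)
    (hexists.mono fun t ↦ norm_operatorConvolution_le hK)

variable {K : ℝ → E →L[ℝ] F} {k : ℝ → ℝ} {μ : Measure ℝ} {g : ℝ → E}

theorem hasDerivAt_operatorConvolution (hK_meas : ∀ x, StronglyMeasurable fun s ↦ K s x)
    (hK : ∀ s, ‖K s‖ ≤ k s) (hk : Integrable k μ) (hg : ContDiff ℝ 1 g)
    (hg_bdd : ∃ D, ∀ x, ‖g x‖ ≤ D) (hg'_bdd : ∃ D, ∀ x, ‖deriv g x‖ ≤ D) (t : ℝ) :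
    HasDerivAt (operatorConvolution K g μ) (operatorConvolution K (deriv g) μ t) t := by
  obtain ⟨D, hD⟩ := hg_bdd
  obtain ⟨D', hD'⟩ := hg'_bdd
  have hmeas : ∀ {φ : ℝ → E}, Continuous φ → ∀ r,
      AEStronglyMeasurable (fun s ↦ K s (φ (r - s))) μ := fun hφ r ↦
    (stronglyMeasurable_clm_apply_of_continuous hK_meas
      (hφ.comp (continuous_sub_left r))).aestronglyMeasurable
  have hbound : ∀ {x : E} {B : ℝ}, ‖x‖ ≤ B → ∀ s, ‖K s x‖ ≤ k s * B := fun hx s ↦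
    (K s).le_of_opNorm_le_of_le (hK s) hx
  refine (hasDerivAt_integral_of_dominated_loc_of_deriv_le (s := Set.univ) Filter.univ_mem
    (.of_forall (hmeas hg.continuous)) ?_ (hmeas (hg.continuous_deriv le_rfl) t)
    (.of_forall fun s r _ ↦ hbound (hD' (r - s)) s) (hk.mul_const D')
    (.of_forall fun s r _ ↦ ?_)).2
  · exact (hk.mul_const D).mono' (hmeas hg.continuous t) (.of_forall fun s ↦ hbound (hD _) s)
  · exact (K s).hasFDerivAt.comp_hasDerivAt r
      (((hg.differentiable one_ne_zero _).hasDerivAt).comp_sub_const r s)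

theorem iteratedDeriv_operatorConvolution (hK_meas : ∀ x, StronglyMeasurable fun s ↦ K s x)
    (hK : ∀ s, ‖K s‖ ≤ k s) (hk : Integrable k μ) {j : ℕ} (hg : ContDiff ℝ j g)
    (hg_bdd : ∀ m ≤ j, ∃ D, ∀ x, ‖iteratedDeriv m g x‖ ≤ D) :
    iteratedDeriv j (operatorConvolution K g μ) = operatorConvolution K (iteratedDeriv j g) μ := by
  induction j with
  | zero => simp only [iteratedDeriv_zero]
  | succ j ih =>
    obtain ⟨hg_j, hg_deriv⟩ := contDiff_nat_succ_iff_contDiff_one_iteratedDeriv.mp hg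
    rw [iteratedDeriv_succ, iteratedDeriv_succ, ih hg_j fun m hm ↦ hg_bdd m (hm.trans j.le_succ)]
    ext t
    exact (hasDerivAt_operatorConvolution hK_meas hK hk hg_deriv (hg_bdd j j.le_succ)
      (by simpa only [iteratedDeriv_succ] using hg_bdd (j + 1) le_rfl) t).deriv

theorem contDiff_operatorConvolution (hK_meas : ∀ x, StronglyMeasurable fun s ↦ K s x)
    (hK : ∀ s, ‖K s‖ ≤ k s) (hk : Integrable k μ) (hg : ContDiff ℝ ∞ g)
    (hg_bdd : ∀ m, ∃ D, ∀ x, ‖iteratedDeriv m g x‖ ≤ D) :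
    ContDiff ℝ ∞ (operatorConvolution K g μ) := by
  refine contDiff_of_differentiable_iteratedDeriv fun m _ t ↦ ?_
  obtain ⟨hg_m, hg_deriv⟩ := contDiff_nat_succ_iff_contDiff_one_iteratedDeriv.mp
    (contDiff_infty.mp hg (m + 1))
  rw [iteratedDeriv_operatorConvolution hK_meas hK hk hg_m fun l _ ↦ hg_bdd l]
  exact (hasDerivAt_operatorConvolution hK_meas hK hk hg_deriv (hg_bdd m)
    (by simpa only [iteratedDeriv_succ] using hg_bdd (m + 1)) t).differentiableAt

end OperatorConvolution

section PolynomialGrowthMoments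

variable {V W : Type*} [SeminormedAddCommGroup V] [NormedAddCommGroup W] {f : V → W} {b M : ℕ}

theorem norm_pow_mul_growth_mul_norm (C : ℝ) (s : V) :
    ‖s‖ ^ b * (C * (1 + ‖s‖ ^ M) * ‖f s‖) =
      C * (‖s‖ ^ b * ‖f s‖ + ‖s‖ ^ (b + M) * ‖f s‖) := by
  ring

variable [MeasurableSpace V] {μ : Measure V}

theorem integrable_norm_pow_mul_growth_mul_norm (C : ℝ)
    (hb : Integrable (fun s ↦ ‖s‖ ^ b * ‖f s‖) μ)
    (hbM : Integrable (fun s ↦ ‖s‖ ^ (b + M) * ‖f s‖) μ) :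
    Integrable (fun s ↦ ‖s‖ ^ b * (C * (1 + ‖s‖ ^ M) * ‖f s‖)) μ := by
  simp only [norm_pow_mul_growth_mul_norm]
  exact (hb.add hbM).const_mul C

theorem integral_norm_pow_mul_growth_mul_norm (C : ℝ)
    (hb : Integrable (fun s ↦ ‖s‖ ^ b * ‖f s‖) μ)
    (hbM : Integrable (fun s ↦ ‖s‖ ^ (b + M) * ‖f s‖) μ) :
    ∫ s, ‖s‖ ^ b * (C * (1 + ‖s‖ ^ M) * ‖f s‖) ∂μ =
      C * ((∫ s, ‖s‖ ^ b * ‖f s‖ ∂μ) + ∫ s, ‖s‖ ^ (b + M) * ‖f s‖ ∂μ) := by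
  simp only [norm_pow_mul_growth_mul_norm]
  rw [integral_const_mul, integral_add hb hbM]

end PolynomialGrowthMoments

section TwistedKernel

variable {X A : Type*} [NonUnitalNormedRing A] [NormedSpace ℝ A] [IsScalarTower ℝ A A]
  [SMulCommClass ℝ A A]

/-- The operator-valued kernel `s ↦ f(s) α_s(·)`. Its `operatorConvolution` with `g` is the twisted
convolution `f * g`. -/
noncomputable def twistedKernel (α : X → A →L[ℝ] A) (f : X → A) (s : X) : A →L[ℝ] A :=
  (mul ℝ A (f s)).comp (α s)

theorem norm_twistedKernel_le {α : X → A →L[ℝ] A} (f : X → A) {s : X} {B : ℝ} (hα : ‖α s‖ ≤ B) :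
    ‖twistedKernel α f s‖ ≤ B * ‖f s‖ :=
  calc ‖twistedKernel α f s‖ ≤ ‖mul ℝ A (f s)‖ * ‖α s‖ := opNorm_comp_le _ _
    _ ≤ ‖f s‖ * B := by gcongr; exact opNorm_mul_apply_le ℝ A (f s)
    _ = B * ‖f s‖ := mul_comm _ _

theorem stronglyMeasurable_twistedKernel_apply [MeasurableSpace X] {α : X → A →L[ℝ] A}
    (hα : ∀ a, StronglyMeasurable fun s ↦ α s a) {f : X → A} (hf : StronglyMeasurable f) (a : A) :
    StronglyMeasurable fun s ↦ twistedKernel α f s a :=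
  hf.mul (hα a)

theorem integral_norm_pow_mul_norm_twistedConvolution_le [SeminormedAddCommGroup X]
    [MeasurableSpace X] [MeasurableAdd₂ X] [MeasurableNeg X] {μ : Measure X} [SFinite μ]
    [μ.IsAddRightInvariant] {α : X → A →L[ℝ] A} {C : ℝ} {M i : ℕ}
    (hα : ∀ s, ‖α s‖ ≤ C * (1 + ‖s‖ ^ M)) {f g : X → A}
    (hf : ∀ b ≤ i + M, Integrable (fun s ↦ ‖s‖ ^ b * ‖f s‖) μ)
    (hg : ∀ c ≤ i, Integrable (fun s ↦ ‖s‖ ^ c * ‖g s‖) μ) :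
    ∫ t, ‖t‖ ^ i * ‖operatorConvolution (twistedKernel α f) g μ t‖ ∂μ ≤
      C * ∑ b ∈ range (i + 1), (i.choose b : ℝ) *
        ((∫ s, ‖s‖ ^ b * ‖f s‖ ∂μ) + ∫ s, ‖s‖ ^ (b + M) * ‖f s‖ ∂μ) *
        ∫ s, ‖s‖ ^ (i - b) * ‖g s‖ ∂μ := by
  have hK : ∀ s, ‖twistedKernel α f s‖ ≤ C * (1 + ‖s‖ ^ M) * ‖f s‖ := fun s ↦
    norm_twistedKernel_le f (hα s)
  have hf_b : ∀ b ≤ i, Integrable (fun s ↦ ‖s‖ ^ b * ‖f s‖) μ := fun b hb ↦ hf b (by lia)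
  have hf_bM : ∀ b ≤ i, Integrable (fun s ↦ ‖s‖ ^ (b + M) * ‖f s‖) μ := fun b hb ↦
    hf (b + M) (by lia)
  refine (integral_norm_pow_mul_norm_operatorConvolution_le hK
    (fun b hb ↦ integrable_norm_pow_mul_growth_mul_norm C (hf_b b hb) (hf_bM b hb)) hg).trans_eq ?_
  rw [mul_sum]
  refine sum_congr rfl fun b hb ↦ ?_
  have hb_le := mem_range_succ_iff.mp hb
  rw [integral_norm_pow_mul_growth_mul_norm C (hf_b b hb_le) (hf_bM b hb_le)]
  ring

end TwistedKernel

theorem stmt_15_general {A : Type*} [NonUnitalNormedRing A] [NormedSpace ℝ A]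
    [IsScalarTower ℝ A A] [SMulCommClass ℝ A A] [CompleteSpace A] {α : ℝ → A →L[ℝ] A}
    (hα : ∀ a, StronglyMeasurable fun s ↦ α s a) {C : ℝ} {M : ℕ}
    (hα_growth : ∀ t, ‖α t‖ ≤ C * (1 + |t| ^ M)) (f g : SchwartzMap ℝ A) (i j : ℕ) :
    ContDiff ℝ ∞ (fun t : ℝ ↦ ∫ s : ℝ, f s * α s (g (t - s))) ∧
    (∀ t : ℝ, iteratedDeriv j (fun t : ℝ ↦ ∫ s : ℝ, f s * α s (g (t - s))) t
        = ∫ s : ℝ, f s * α s (iteratedDeriv j g (t - s))) ∧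
    (∫ t : ℝ, |t| ^ i *
        ‖iteratedDeriv j (fun t : ℝ ↦ ∫ s : ℝ, f s * α s (g (t - s))) t‖)
      ≤ C * ∑ β ∈ range (i + 1), (i.choose β : ℝ) *
            ((∫ t : ℝ, |t| ^ β * ‖f t‖) + (∫ t : ℝ, |t| ^ (β + M) * ‖f t‖)) *
            (∫ t : ℝ, |t| ^ (i - β) * ‖iteratedDeriv j g t‖) := by
  have hK_meas := stronglyMeasurable_twistedKernel_apply hα f.continuous.stronglyMeasurable
  have hK : ∀ s, ‖twistedKernel α f s‖ ≤ C * (1 + ‖s‖ ^ M) * ‖f s‖ := fun s ↦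
    norm_twistedKernel_le f (hα_growth s)
  have hf_int := f.integrable_pow_mul volume
  have hk : Integrable fun s ↦ C * (1 + ‖s‖ ^ M) * ‖f s‖ := by
    simpa using integrable_norm_pow_mul_growth_mul_norm C (hf_int 0) (hf_int (0 + M))
  have hg_bdd : ∀ m, ∃ D, ∀ x, ‖iteratedDeriv m g x‖ ≤ D := fun m ↦
    ⟨_, fun x ↦ by simpa using g.le_seminorm' ℝ 0 m x⟩
  have hg_int : ∀ c, Integrable fun x ↦ ‖x‖ ^ c * ‖iteratedDeriv j g x‖ := fun c ↦ by
    simpa only [norm_iteratedFDeriv_eq_norm_iteratedDeriv] using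
      g.integrable_pow_mul_iteratedFDeriv volume c j
  have hderiv : iteratedDeriv j (fun t : ℝ ↦ ∫ s : ℝ, f s * α s (g (t - s))) =
      operatorConvolution (twistedKernel α f) (iteratedDeriv j g) volume :=
    iteratedDeriv_operatorConvolution hK_meas hK hk (g.smooth j) fun m _ ↦ hg_bdd m
  refine ⟨contDiff_operatorConvolution hK_meas hK hk (g.smooth ⊤) hg_bdd, congrFun hderiv, ?_⟩
  rw [hderiv]
  exact integral_norm_pow_mul_norm_twistedConvolution_le hα_growth (fun b _ ↦ hf_int b)
    fun c _ ↦ hg_int c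

open MeasureTheory SchwartzMap in
/-- Equation `eq.robert`: for a one-parameter group `α` of automorphisms with polynomial
growth (`‖α_t a‖ ≤ C(1+|t|^M)‖a‖`) of a Banach algebra `A`, the twisted convolution
`(f*g)(t) = ∫ f(s) α_s(g(t-s)) ds` of Schwartz functions `f, g ∈ 𝒮(ℝ, A)` is smooth with
`(f*g)^{(j)}(t) = ∫ f(s) α_s(g^{(j)}(t-s)) ds`, and satisfies
`‖f*g‖_{n,i,j} ≤ C ∑_{β+γ=i} (i choose β)(‖f‖_{β,0} + ‖f‖_{β+M,0})‖g‖_{γ,j}`,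
where `‖h‖_{i,j} = ∫ |t|^i ‖h^{(j)}(t)‖ dt`. -/
theorem stmt_15
    (A : Type*) [NormedRing A] [NormedAlgebra ℂ A] [CompleteSpace A]
    (α : ℝ → A ≃ₐ[ℂ] A)
    (hgrp : ∀ t s : ℝ, ∀ a : A, α (t + s) a = α t (α s a))
    (h0 : ∀ a : A, α 0 a = a)
    (hcont : Continuous fun p : ℝ × A => α p.1 p.2)
    (C : ℝ) (hC : 0 < C) (M : ℕ)
    (hpoly : ∀ (t : ℝ) (a : A), ‖α t a‖ ≤ C * (1 + |t| ^ M) * ‖a‖)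
    (f g : SchwartzMap ℝ A) (i j : ℕ) :
    ContDiff ℝ (⊤ : ℕ∞) (fun t : ℝ => ∫ s : ℝ, f s * α s (g (t - s))) ∧
    (∀ t : ℝ, iteratedDeriv j (fun t : ℝ => ∫ s : ℝ, f s * α s (g (t - s))) t
        = ∫ s : ℝ, f s * α s (iteratedDeriv j (⇑g) (t - s))) ∧
    (∫ t : ℝ, |t| ^ i *
        ‖iteratedDeriv j (fun t : ℝ => ∫ s : ℝ, f s * α s (g (t - s))) t‖)
      ≤ C * ∑ β ∈ Finset.range (i + 1), (i.choose β : ℝ) *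
            ((∫ t : ℝ, |t| ^ β * ‖f t‖) + (∫ t : ℝ, |t| ^ (β + M) * ‖f t‖)) *
            (∫ t : ℝ, |t| ^ (i - β) * ‖iteratedDeriv j (⇑g) t‖) :=
  stmt_15_general
    (α := fun t ↦ ((α t).toLinearMap.restrictScalars ℝ).mkContinuous (C * (1 + |t| ^ M)) (hpoly t))
    (fun a ↦ (hcont.comp (Continuous.prodMk_left a)).stronglyMeasurable)
    (fun t ↦ LinearMap.mkContinuous_norm_le _ (by positivity) (hpoly t)) f g i j
end
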